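/- arXiv:1002.2762 — 3 statements merged into one kernel-verified Lean document; each statement's English description precedes it below -/
import Mathlib

section
/- In U the elements v₀, v₁, v₂, v₃ satisfy the q-commutation relations v₀v₁ = q⁻²v₁v₀, v₁v₂ = q⁻²v₂v₁, and v₂v₃ = q⁻²v₃v₂. -/
noncomputable section

abbrev F : Type := RatFunc ℚ

/-- The deformation parameter `q`. -/
def qq : F := RatFunc.X

/-- The quantum integer `[3] = q² + 1 + q⁻²`. -/
def box3 : F := qq ^ 2 + 1 + (qq⁻¹) ^ 2

/-- The generators `E₁, E₂` of the free algebra. -/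
def gen (i : Fin 2) : FreeAlgebra F (Fin 2) := FreeAlgebra.ι F i

/-- The quantized Serre relations. -/
inductive SerreRel : FreeAlgebra F (Fin 2) → FreeAlgebra F (Fin 2) → Prop
  | rel1 : SerreRel
      (gen 0 ^ 3 * gen 1 - box3 • (gen 0 ^ 2 * gen 1 * gen 0)
        + box3 • (gen 0 * gen 1 * gen 0 ^ 2) - gen 1 * gen 0 ^ 3) 0
  | rel2 : SerreRel
      (gen 1 ^ 3 * gen 0 - box3 • (gen 1 ^ 2 * gen 0 * gen 1)
        + box3 • (gen 1 * gen 0 * gen 1 ^ 2) - gen 0 * gen 1 ^ 3) 0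

/-- `U = U_q(𝔫)`, the free algebra on `E₁, E₂` modulo the quantized Serre relations. -/
abbrev U : Type := RingQuot SerreRel

def E1 : U := RingQuot.mkAlgHom F SerreRel (gen 0)
def E2 : U := RingQuot.mkAlgHom F SerreRel (gen 1)

/-- `A = (1/(q+q⁻¹))(E₂E₁ − q⁻²E₁E₂)`. -/
def Aelt : U := (qq + qq⁻¹)⁻¹ • (E2 * E1 - (qq⁻¹) ^ 2 • (E1 * E2))

def v0 : U := E1
def v1 : U := Aelt * v0 - v0 * Aelt
def v2 : U := Aelt * v1 - v1 * Aelt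
def v3 : U := Aelt * v2 - v2 * Aelt

/-- `uᵢ = (1 − q⁻²)⁻²ⁱ vᵢ`. -/
def u0 : U := v0
def u1 : U := ((1 - (qq⁻¹) ^ 2)⁻¹) ^ 2 • v1
def u2 : U := ((1 - (qq⁻¹) ^ 2)⁻¹) ^ 4 • v2
def u3 : U := ((1 - (qq⁻¹) ^ 2)⁻¹) ^ 6 • v3

/-- `p₁ = u₃u₁ − q²u₂²`. -/
def p1 : U := u3 * u1 - qq ^ 2 • u2 ^ 2
/-- `p₀ = u₂u₀ − q²u₁²`. -/
def p0 : U := u2 * u0 - qq ^ 2 • u1 ^ 2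

/-!
Write `p = q⁻²`, `[a, b]_p = ab - p ba`, `B = [y, x]_p` and `xₙ = (ad B)ⁿ x`. The Serre relations
say that `[x, x₁]_p = 0` and `[y₁, y]_p = 0` with `y₁ = [y, B]`. They imply that
`P = [y, x₁]_p = [y₁, x]_p` commutes with `B` and that `[P, x] = p⁻¹ B x₁ - p x₁ B`; hence a
combination `H` of `P` and `B²` commutes with `B` and satisfies `[H, xₙ] = d xₙ₊₂` with
`d = p⁻¹ + p`. Now `(ad B)²` sends `[xₙ, xₙ₊₁]_p` to
`[xₙ₊₂, xₙ₊₁]_p + 2 [xₙ₊₁, xₙ₊₂]_p + [xₙ, xₙ₊₃]_p`, whereas `ad H` sends it to `d` times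
the same sum without the middle term. So `[xₙ, xₙ₊₁]_p = 0` implies `[xₙ₊₁, xₙ₊₂]_p = 0`.
-/

attribute [local instance] LieRing.ofAssociativeRing

section Commutator

variable {K R : Type*} [CommRing K] [Ring R] [Algebra K R]

/-- The `p`-commutator `ab - p ba`, as a bilinear map; `a` and `b` `p`-commute when it vanishes. -/
def qComm (p : K) : R →ₗ[K] R →ₗ[K] R :=
  LinearMap.mul K R - p • (LinearMap.mul K R).flip

theorem qComm_apply (p : K) (a b : R) : qComm p a b = a * b - p • (b * a) := rfl

theorem qComm_eq_zero_iff {p : K} {a b : R} : qComm p a b = 0 ↔ a * b = p • (b * a) :=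
  sub_eq_zero

theorem lie_qComm (p : K) (c a b : R) :
    ⁅c, qComm p a b⁆ = qComm p ⁅c, a⁆ b + qComm p a ⁅c, b⁆ := by
  simp only [qComm_apply, Ring.lie_def, mul_sub, sub_mul, mul_smul_comm, smul_mul_assoc, mul_assoc]
  module

theorem qComm_mul_right (p : K) (a b c : R) :
    qComm p a (b * c) = ⁅a, b⁆ * c + b * qComm p a c := by
  simp only [qComm_apply, Ring.lie_def, mul_sub, sub_mul, mul_smul_comm, mul_assoc]
  module

theorem qComm_mul_right' (p : K) (a b c : R) :
    qComm p a (b * c) = qComm p a b * c + p • (b * ⁅a, c⁆) := by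
  simp only [qComm_apply, Ring.lie_def, mul_sub, sub_mul, smul_mul_assoc, mul_assoc]
  module

theorem qComm_mul_left (p : K) (a b c : R) :
    qComm p (a * b) c = a * ⁅b, c⁆ + qComm p a c * b := by
  simp only [qComm_apply, Ring.lie_def, mul_sub, sub_mul, smul_mul_assoc, mul_assoc]
  module

theorem qComm_mul_left' (p : K) (a b c : R) :
    qComm p (a * b) c = a * qComm p b c + p • (⁅a, c⁆ * b) := by
  simp only [qComm_apply, Ring.lie_def, mul_sub, sub_mul, mul_smul_comm, mul_assoc]
  module

theorem qComm_lie_qComm (p : K) (x y : R) :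
    qComm p ⁅y, qComm p y x⁆ x = qComm p y ⁅qComm p y x, x⁆ := by
  have leibniz := lie_qComm p (qComm p y x) y x
  rw [lie_self, ← lie_skew, map_neg, LinearMap.neg_apply] at leibniz
  exact neg_add_eq_zero.1 leibniz.symm

theorem lie_ad_pow_eq_smul_lie_lie {H B x : R} {d : K} (hHB : ⁅H, B⁆ = 0)
    (hHx : ⁅H, x⁆ = d • ⁅B, ⁅B, x⁆⁆) (n : ℕ) :
    ⁅H, (LieAlgebra.ad K R B ^ n) x⁆ = d • ⁅B, ⁅B, (LieAlgebra.ad K R B ^ n) x⁆⁆ := by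
  induction n with
  | zero => simpa using hHx
  | succ n ih =>
    rw [pow_succ', Module.End.mul_apply, LieAlgebra.ad_apply, leibniz_lie, hHB, zero_lie, zero_add,
      ih]
    exact lie_smul d B _

end Commutator

section Field

variable {K R : Type*} [Field K] [Ring R] [Algebra K R] {p : K}

theorem lie_qComm_left_of_qComm_eq_zero (hp : p ≠ 0) {x z : R} (y : R) (hxz : qComm p x z = 0) :
    ⁅qComm p y z, x⁆ = p⁻¹ • (qComm p y x * z) - p • (z * qComm p y x) := by
  have key : ⁅qComm p y z, x⁆ - (p⁻¹ • (qComm p y x * z) - p • (z * qComm p y x)) =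
      p • (qComm p x z * y) - p⁻¹ • (y * qComm p x z) := by
    simp only [qComm_apply, Ring.lie_def, mul_sub, sub_mul, mul_smul_comm, smul_mul_assoc,
      mul_assoc]
    match_scalars <;> field_simp <;> ring
  simpa only [hxz, zero_mul, mul_zero, smul_zero, sub_zero, sub_eq_zero] using key

theorem lie_qComm_right_of_qComm_eq_zero (hp : p ≠ 0) {y z : R} (x : R) (hzy : qComm p z y = 0) :
    ⁅y, qComm p z x⁆ = p⁻¹ • (z * qComm p y x) - p • (qComm p y x * z) := by
  have key : ⁅y, qComm p z x⁆ - (p⁻¹ • (z * qComm p y x) - p • (qComm p y x * z)) =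
      p • (x * qComm p z y) - p⁻¹ • (qComm p z y * x) := by
    simp only [qComm_apply, Ring.lie_def, mul_sub, sub_mul, mul_smul_comm, smul_mul_assoc,
      mul_assoc]
    match_scalars <;> field_simp <;> ring
  simpa only [hzy, zero_mul, mul_zero, smul_zero, sub_zero, sub_eq_zero] using key

/-- The quantized Serre expression in `x` and `y`, with `p = q⁻²`, so that `[3] = p⁻¹ + 1 + p`. -/
def qSerre (p : K) (x y : R) : R :=
  x ^ 3 * y - (p⁻¹ + 1 + p) • (x ^ 2 * y * x) + (p⁻¹ + 1 + p) • (x * y * x ^ 2) - y * x ^ 3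

/-- If `l` and `r` are the left and right multiplications by `x`, then
`qSerre p x = (l - r) (l - p r) (l - p⁻¹ r)`, and each factor is a commutator or `p`-commutator up
to a scalar. -/
theorem qComm_lie_eq_smul_qSerre (hp : p ≠ 0) (x y : R) :
    qComm p x ⁅qComm p y x, x⁆ = p • qSerre p x y := by
  simp only [qSerre, qComm_apply, Ring.lie_def, pow_succ, pow_zero, one_mul, mul_sub, sub_mul,
    mul_smul_comm, smul_mul_assoc, mul_assoc]
  match_scalars <;> field_simp <;> ring

theorem qComm_lie_eq_neg_smul_qSerre (hp : p ≠ 0) (x y : R) :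
    qComm p ⁅y, qComm p y x⁆ y = -p • qSerre p y x := by
  simp only [qSerre, qComm_apply, Ring.lie_def, pow_succ, pow_zero, one_mul, mul_sub, sub_mul,
    mul_smul_comm, smul_mul_assoc, mul_assoc]
  match_scalars <;> field_simp <;> ring

theorem qComm_lie_eq_zero_of_qSerre_eq_zero (hp : p ≠ 0) {x y : R} (hxy : qSerre p x y = 0) :
    qComm p x ⁅qComm p y x, x⁆ = 0 := by
  rw [qComm_lie_eq_smul_qSerre hp, hxy, smul_zero]

theorem qComm_lie_eq_zero_of_qSerre_eq_zero' (hp : p ≠ 0) {x y : R} (hyx : qSerre p y x = 0) :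
    qComm p ⁅y, qComm p y x⁆ y = 0 := by
  rw [qComm_lie_eq_neg_smul_qSerre hp, hyx, smul_zero]

theorem lie_qComm_lie_qComm_eq_zero (hp : p ≠ 0) (h3 : p⁻¹ + 1 + p ≠ 0) {x y : R}
    (hxy : qSerre p x y = 0) (hyx : qSerre p y x = 0) :
    ⁅qComm p y ⁅qComm p y x, x⁆, qComm p y x⁆ = 0 := by
  set B := qComm p y x with hB
  set P := qComm p y ⁅B, x⁆
  have P_eq : qComm p ⁅y, B⁆ x = P := qComm_lie_qComm p x y
  have lie_P_x : ⁅P, x⁆ = p⁻¹ • (B * ⁅B, x⁆) - p • (⁅B, x⁆ * B) :=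
    lie_qComm_left_of_qComm_eq_zero hp y (qComm_lie_eq_zero_of_qSerre_eq_zero hp hxy)
  have lie_y_P : ⁅y, P⁆ = p⁻¹ • (⁅y, B⁆ * B) - p • (B * ⁅y, B⁆) := by
    rw [← P_eq]
    exact lie_qComm_right_of_qComm_eq_zero hp x (qComm_lie_eq_zero_of_qSerre_eq_zero' hp hyx)
  have lie_P_B : ⁅P, B⁆ = -(p⁻¹ + p) • ⁅P, B⁆ :=
    calc ⁅P, B⁆
        = qComm p y (p⁻¹ • (B * ⁅B, x⁆) - p • (⁅B, x⁆ * B)) -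
            qComm p (p⁻¹ • (⁅y, B⁆ * B) - p • (B * ⁅y, B⁆)) x := by
          rw [hB, lie_qComm, ← hB, lie_P_x, ← lie_skew, lie_y_P, map_neg, LinearMap.neg_apply,
            neg_add_eq_sub]
      _ = (p⁻¹ • (⁅y, B⁆ * ⁅B, x⁆ + B * P) - p • (P * B + p • (⁅B, x⁆ * ⁅y, B⁆))) -
            (p⁻¹ • (⁅y, B⁆ * ⁅B, x⁆ + P * B) - p • (B * P + p • (⁅B, x⁆ * ⁅y, B⁆))) := by
          simp only [map_sub, map_smul, LinearMap.sub_apply, LinearMap.smul_apply]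
          rw [qComm_mul_right p y B, qComm_mul_right' p y _ B, qComm_mul_left p _ B x,
            qComm_mul_left' p B _ x, P_eq]
      _ = -(p⁻¹ + p) • ⁅P, B⁆ := by
          rw [Ring.lie_def P B]
          module
  have smul_lie_P_B : (p⁻¹ + 1 + p) • ⁅P, B⁆ = 0 := by
    rw [show p⁻¹ + 1 + p = 1 - -(p⁻¹ + p) by ring, sub_smul, one_smul, ← lie_P_B, sub_self]
  exact (smul_eq_zero_iff_right h3).1 smul_lie_P_B

/-- The element `H = 2P - (p⁻¹ - p) B²` with `B = [y, x]_p` and `P = [y, [B, x]]_p`; under the Serre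
relations `ad H` raises the index of `(ad B)ⁿ x` by two, up to a scalar. -/
def doubleShift (p : K) (x y : R) : R :=
  (2 : K) • qComm p y ⁅qComm p y x, x⁆ - (p⁻¹ - p) • (qComm p y x * qComm p y x)

theorem lie_doubleShift_qComm_eq_zero (hp : p ≠ 0) (h3 : p⁻¹ + 1 + p ≠ 0) {x y : R}
    (hxy : qSerre p x y = 0) (hyx : qSerre p y x = 0) :
    ⁅doubleShift p x y, qComm p y x⁆ = 0 := by
  have lie_sq : ⁅qComm p y x * qComm p y x, qComm p y x⁆ = 0 := by
    rw [Ring.lie_def, mul_assoc, sub_self]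
  rw [doubleShift, sub_lie, smul_lie, smul_lie, lie_qComm_lie_qComm_eq_zero hp h3 hxy hyx, lie_sq,
    smul_zero, smul_zero, sub_zero]

theorem lie_doubleShift_eq_smul_lie_lie (hp : p ≠ 0) {x y : R} (hxy : qSerre p x y = 0) :
    ⁅doubleShift p x y, x⁆ = (p⁻¹ + p) • ⁅qComm p y x, ⁅qComm p y x, x⁆⁆ := by
  rw [doubleShift, sub_lie, smul_lie, smul_lie,
    lie_qComm_left_of_qComm_eq_zero hp y (qComm_lie_eq_zero_of_qSerre_eq_zero hp hxy)]
  simp only [Ring.lie_def, mul_sub, sub_mul, mul_assoc]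
  module

theorem qComm_lie_lie_eq_zero {H B x : R} {d : K} (h2 : (2 : K) ≠ 0) (hd : d ≠ 0)
    (hHx : ⁅H, x⁆ = d • ⁅B, ⁅B, x⁆⁆) (hHx' : ⁅H, ⁅B, x⁆⁆ = d • ⁅B, ⁅B, ⁅B, x⁆⁆⁆)
    (hx : qComm p x ⁅B, x⁆ = 0) :
    qComm p ⁅B, x⁆ ⁅B, ⁅B, x⁆⁆ = 0 := by
  have ad_B_sq : qComm p ⁅B, ⁅B, x⁆⁆ ⁅B, x⁆ + (2 : K) • qComm p ⁅B, x⁆ ⁅B, ⁅B, x⁆⁆ +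
      qComm p x ⁅B, ⁅B, ⁅B, x⁆⁆⁆ = 0 :=
    calc _ = ⁅B, ⁅B, qComm p x ⁅B, x⁆⁆⁆ := by
          simp only [lie_qComm, lie_add]
          module
      _ = 0 := by rw [hx, lie_zero, lie_zero]
  have ad_H : d • (qComm p ⁅B, ⁅B, x⁆⁆ ⁅B, x⁆ + qComm p x ⁅B, ⁅B, ⁅B, x⁆⁆⁆) = 0 :=
    calc _ = ⁅H, qComm p x ⁅B, x⁆⁆ := by
          rw [lie_qComm, hHx, hHx', map_smul, map_smul, LinearMap.smul_apply, smul_add]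
      _ = 0 := by rw [hx, lie_zero]
  have outer_terms := (smul_eq_zero_iff_right hd).1 ad_H
  have middle_term : (2 : K) • qComm p ⁅B, x⁆ ⁅B, ⁅B, x⁆⁆ = 0 := by
    rwa [add_right_comm, outer_terms, zero_add] at ad_B_sq
  exact (smul_eq_zero_iff_right h2).1 middle_term

theorem qComm_ad_pow_eq_zero {H B x : R} {d : K} (h2 : (2 : K) ≠ 0) (hd : d ≠ 0)
    (hHB : ⁅H, B⁆ = 0) (hHx : ⁅H, x⁆ = d • ⁅B, ⁅B, x⁆⁆) (hx : qComm p x ⁅B, x⁆ = 0) (n : ℕ) :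
    qComm p ((LieAlgebra.ad K R B ^ n) x) ((LieAlgebra.ad K R B ^ (n + 1)) x) = 0 := by
  induction n with
  | zero => simpa using hx
  | succ n ih =>
    have hHn := lie_ad_pow_eq_smul_lie_lie hHB hHx n
    have hHn' := lie_ad_pow_eq_smul_lie_lie hHB hHx (n + 1)
    simp only [pow_succ', Module.End.mul_apply, LieAlgebra.ad_apply] at ih hHn' ⊢
    exact qComm_lie_lie_eq_zero h2 hd hHn hHn' ih

theorem stmt0_general {x y : R} (h2 : (2 : K) ≠ 0) (hp : p ≠ 0) (h3 : p⁻¹ + 1 + p ≠ 0)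
    (hd : p⁻¹ + p ≠ 0) (hxy : qSerre p x y = 0) (hyx : qSerre p y x = 0) (c : K) (n : ℕ) :
    (LieAlgebra.ad K R (c • qComm p y x) ^ n) x *
        (LieAlgebra.ad K R (c • qComm p y x) ^ (n + 1)) x =
      p • ((LieAlgebra.ad K R (c • qComm p y x) ^ (n + 1)) x *
        (LieAlgebra.ad K R (c • qComm p y x) ^ n) x) := by
  have unscaled := qComm_ad_pow_eq_zero h2 hd (lie_doubleShift_qComm_eq_zero hp h3 hxy hyx)
    (lie_doubleShift_eq_smul_lie_lie hp hxy) (qComm_lie_eq_zero_of_qSerre_eq_zero hp hxy) n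
  rw [← qComm_eq_zero_iff, map_smul, smul_pow, smul_pow, LinearMap.smul_apply,
    LinearMap.smul_apply, map_smul, map_smul, LinearMap.smul_apply, unscaled, smul_zero, smul_zero]

end Field

section Transcendental

variable {K L : Type*} [Field K] [Field L] [Algebra K L] {t : L}

theorem transcendental_zpow (ht : Transcendental K t) {n : ℤ} (hn : n ≠ 0) :
    Transcendental K (t ^ n) := by
  obtain ⟨m, rfl | rfl⟩ := n.eq_nat_or_neg
  · rw [zpow_natCast]
    exact ht.pow (by lia)
  · rw [zpow_neg, zpow_natCast, Transcendental, IsAlgebraic.inv_iff]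
    exact ht.pow (by lia)

theorem inv_add_self_ne_algebraMap_of_transcendental (ht : Transcendental K t) (c : K) :
    t⁻¹ + t ≠ algebraMap K L c := by
  intro h
  have t_ne_zero : t ≠ 0 := fun h0 ↦ ht (h0 ▸ isAlgebraic_zero)
  have root : Polynomial.aeval t (Polynomial.X ^ 2 - Polynomial.C c * Polynomial.X + 1) = 0 := by
    simp only [map_add, map_sub, map_mul, map_pow, Polynomial.aeval_X, Polynomial.aeval_C, map_one,
      ← h]
    field_simp
    ring
  have coeff_zero := congrArg (Polynomial.coeff · 0) (transcendental_iff.1 ht _ root)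
  simp at coeff_zero

theorem inv_X_zpow_add_X_zpow_ne_C {n : ℤ} (hn : n ≠ 0) (c : K) :
    ((RatFunc.X : RatFunc K) ^ n)⁻¹ + RatFunc.X ^ n ≠ RatFunc.C c :=
  inv_add_self_ne_algebraMap_of_transcendental (transcendental_zpow RatFunc.transcendental_X hn) c

end Transcendental

theorem qSerre_E1_E2 : qSerre (qq ^ (-2 : ℤ)) E1 E2 = 0 := by
  simpa [qSerre, box3, E1, E2, zpow_neg] using RingQuot.mkAlgHom_rel F SerreRel.rel1

theorem qSerre_E2_E1 : qSerre (qq ^ (-2 : ℤ)) E2 E1 = 0 := by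
  simpa [qSerre, box3, E1, E2, zpow_neg] using RingQuot.mkAlgHom_rel F SerreRel.rel2

theorem Aelt_eq_smul_qComm : Aelt = (qq + qq⁻¹)⁻¹ • qComm (qq ^ (-2 : ℤ)) E2 E1 := by
  simp [Aelt, qComm_apply, zpow_neg]

theorem qq_zpow_ne_zero (n : ℤ) : qq ^ n ≠ 0 :=
  zpow_ne_zero n RatFunc.X_ne_zero

theorem inv_qq_zpow_add_qq_zpow_ne_zero {n : ℤ} (hn : n ≠ 0) : (qq ^ n)⁻¹ + qq ^ n ≠ 0 := by
  simpa only [qq, map_zero] using inv_X_zpow_add_X_zpow_ne_C (K := ℚ) hn 0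

theorem inv_qq_zpow_add_one_add_qq_zpow_ne_zero {n : ℤ} (hn : n ≠ 0) :
    (qq ^ n)⁻¹ + 1 + qq ^ n ≠ 0 := by
  rw [add_right_comm, ne_eq, add_eq_zero_iff_eq_neg]
  simpa only [qq, map_neg, map_one] using inv_X_zpow_add_X_zpow_ne_C (K := ℚ) hn (-1)

/-- In `U` the elements `v₀, v₁, v₂, v₃` satisfy the q-commutation relations
`v₀v₁ = q⁻²v₁v₀`, `v₁v₂ = q⁻²v₂v₁`, and `v₂v₃ = q⁻²v₃v₂`. -/
theorem stmt0 :
    v0 * v1 = qq ^ (-2 : ℤ) • (v1 * v0) ∧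
    v1 * v2 = qq ^ (-2 : ℤ) • (v2 * v1) ∧
    v2 * v3 = qq ^ (-2 : ℤ) • (v3 * v2) := by
  have h := stmt0_general two_ne_zero (qq_zpow_ne_zero (-2))
    (inv_qq_zpow_add_one_add_qq_zpow_ne_zero (by decide))
    (inv_qq_zpow_add_qq_zpow_ne_zero (by decide)) qSerre_E1_E2 qSerre_E2_E1 (qq + qq⁻¹)⁻¹
  rw [← Aelt_eq_smul_qComm] at h
  exact ⟨h 0, h 1, h 2⟩
end
end

section
/- In U the straightening relations v₀v₂ = q⁻²v₂v₀ + (q⁻² − 1)v₁² and v₁v₃ = q⁻²v₃v₁ + (q⁻² − 1)v₂² hold. -/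
noncomputable section

/-! Put `p = q⁻²`, write `[x, y]ₚ = x y - p y x`, and rescale `E₂` to `y` so that `A = [y, E₁]ₚ`.
The Serre relations then say `[E₁, v₁]ₚ = 0` and `[w, y]ₚ = 0`, where `w = ⁅y, A⁆`. Since `⁅A, ·⁆`
is a derivation, the first straightening relation is the image of `[v₀, v₁]ₚ = 0` under it, and
the second is the image of `[v₁, v₂]ₚ = 0`, so everything reduces to the latter identity.

It comes from the second imaginary root vector `B = [y, v₁]ₚ = [w, E₁]ₚ`. The q-Jacobi identities
express `p ⁅B, E₁⁆` and `p ⁅y, B⁆` through `A`, and computing `p ⁅B, [y, E₁]ₚ⁆` from them gives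
`(1 + p + p²) ⁅A, B⁆ = 0`. So `A` and `B` commute, which yields `p ⁅B, v₁⁆` as well, and then
`p ⁅B, [E₁, v₁]ₚ⁆ = 0` turns into `(1 + p²) [v₁, v₂]ₚ = 0`. -/

variable {K R : Type*}

attribute [local instance] LieRing.ofAssociativeRing

section QCommutator

variable [CommRing K] [Ring R] [Algebra K R]

/-- The `p`-deformed commutator `[x, y]ₚ = x y - p y x`, in terms of which both the Serre relations
and the straightening relations are expressed. -/
def qCommutator (p : K) (x y : R) : R := x * y - p • (y * x)

theorem qCommutator_eq_iff_mul_eq {p : K} {x y z : R} :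
    qCommutator p x y = z ↔ x * y = p • (y * x) + z :=
  sub_eq_iff_eq_add'

@[simp]
theorem qCommutator_one (x y : R) : qCommutator (1 : K) x y = ⁅x, y⁆ := by
  rw [qCommutator, one_smul, Ring.lie_def]

@[simp]
theorem qCommutator_zero_left (p : K) (y : R) : qCommutator p 0 y = 0 := by simp [qCommutator]

@[simp]
theorem qCommutator_zero_right (p : K) (x : R) : qCommutator p x 0 = 0 := by simp [qCommutator]

theorem qCommutator_neg_left (p : K) (x y : R) :
    qCommutator p (-x) y = -qCommutator p x y := by
  simp only [qCommutator, neg_mul, mul_neg, smul_neg]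
  abel

theorem qCommutator_smul_left (p c : K) (x y : R) :
    qCommutator p (c • x) y = c • qCommutator p x y := by
  simp only [qCommutator, smul_mul_assoc, mul_smul_comm]
  module

theorem qCommutator_smul_right (p c : K) (x y : R) :
    qCommutator p x (c • y) = c • qCommutator p x y := by
  simp only [qCommutator, smul_mul_assoc, mul_smul_comm]
  module

theorem qCommutator_self (p : K) (x : R) : qCommutator p x x = -((p - 1) • x ^ 2) := by
  rw [qCommutator, pow_two]
  module

theorem qCommutator_sub_qCommutator_swap (p : K) (x y : R) :
    qCommutator p x y - qCommutator p y x = (1 + p) • ⁅x, y⁆ := by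
  simp only [qCommutator, Ring.lie_def]
  module

theorem qCommutator_qCommutator_right (m n : K) (x y z : R) :
    qCommutator m x (qCommutator n y z) =
      qCommutator (m * n) ⁅x, y⁆ z + qCommutator n y (qCommutator m x z) := by
  simp only [qCommutator, Ring.lie_def, mul_sub, sub_mul, smul_mul_assoc, mul_smul_comm, mul_assoc]
  module

theorem qCommutator_qCommutator_left (m n : K) (x y z : R) :
    qCommutator m (qCommutator n x y) z =
      qCommutator (m * n) x ⁅y, z⁆ + qCommutator n (qCommutator m x z) y := by
  simp only [qCommutator, Ring.lie_def, mul_sub, sub_mul, smul_mul_assoc, mul_smul_comm, mul_assoc]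
  module

theorem qCommutator_mul_qCommutator_right (m n : K) (x y z : R) :
    qCommutator (m * n) x (qCommutator n y z) =
      qCommutator (m * n) (qCommutator n x y) z + n • ⁅y, qCommutator m x z⁆ := by
  simp only [qCommutator, Ring.lie_def, mul_sub, sub_mul, smul_mul_assoc, mul_smul_comm, mul_assoc]
  module

theorem lie_qCommutator (p : K) (x y z : R) :
    ⁅x, qCommutator p y z⁆ = qCommutator p ⁅x, y⁆ z + qCommutator p y ⁅x, z⁆ := by
  simpa using qCommutator_qCommutator_right 1 p x y z

theorem qCommutator_lie_lie {p : K} {a x : R} (h : qCommutator p x ⁅a, x⁆ = 0) :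
    qCommutator p x ⁅a, ⁅a, x⁆⁆ = (p - 1) • ⁅a, x⁆ ^ 2 := by
  have leibniz := lie_qCommutator p a x ⁅a, x⁆
  rw [h, lie_zero, qCommutator_self] at leibniz
  exact (neg_add_eq_zero.mp leibniz.symm).symm

theorem qCommutator_qCommutator_self_add_smul_sq (p : K) (a x : R) :
    qCommutator p (qCommutator (p ^ 2) a x) x + (p - 1) • qCommutator (p ^ 2) a (x ^ 2) =
      qCommutator (p ^ 3) x ⁅a, x⁆ - (1 + p ^ 2) • qCommutator p x ⁅a, x⁆ := by
  simp only [qCommutator, Ring.lie_def, pow_two x, mul_sub, sub_mul, smul_mul_assoc,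
    mul_smul_comm, mul_assoc]
  module

end QCommutator

section ImaginaryRootVectors

variable [CommRing K] [Ring R] [Algebra K R]

/-- The root vector of the imaginary root `δ = α₁ + α₂`, for root vectors `x` of `α₁` and `y` of
`α₂`. It is the element `A` of the paper when `x = E₁` and `y = (q + q⁻¹)⁻¹ E₂`. -/
def imagRootVec (p : K) (x y : R) : R := qCommutator p y x

/-- The root vector of the imaginary root `2δ`, for root vectors `x` of `α₁` and `y` of `α₂`. It
commutes with `imagRootVec`, which is the key to the straightening relations. -/
def imagRootVecTwo (p : K) (x y : R) : R := qCommutator p y ⁅imagRootVec p x y, x⁆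

variable {p : K} {x y : R}

theorem imagRootVecTwo_eq_qCommutator_lie :
    imagRootVecTwo p x y = qCommutator p ⁅y, imagRootVec p x y⁆ x := by
  have leibniz := lie_qCommutator p (imagRootVec p x y) y x
  rw [← imagRootVec, lie_self, ← lie_skew, qCommutator_neg_left] at leibniz
  exact (neg_add_eq_zero.mp leibniz.symm).symm

theorem smul_lie_imagRootVecTwo (hx : qCommutator p x ⁅imagRootVec p x y, x⁆ = 0) :
    p • ⁅imagRootVecTwo p x y, x⁆ =
      qCommutator (p ^ 2) (imagRootVec p x y) ⁅imagRootVec p x y, x⁆ := by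
  have jacobi := qCommutator_mul_qCommutator_right p p y x ⁅imagRootVec p x y, x⁆
  rw [hx, qCommutator_zero_right, ← pow_two, ← imagRootVec.eq_def p x y, ← imagRootVecTwo,
    ← lie_skew x, smul_neg] at jacobi
  exact (add_neg_eq_zero.mp jacobi.symm).symm

theorem smul_lie_imagRootVecTwo_right (hy : qCommutator p ⁅y, imagRootVec p x y⁆ y = 0) :
    p • ⁅y, imagRootVecTwo p x y⁆ =
      qCommutator (p ^ 2) ⁅y, imagRootVec p x y⁆ (imagRootVec p x y) := by
  have jacobi := qCommutator_mul_qCommutator_right p p ⁅y, imagRootVec p x y⁆ y x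
  rw [hy, qCommutator_zero_left, zero_add, ← pow_two, ← imagRootVec,
    ← imagRootVecTwo_eq_qCommutator_lie] at jacobi
  exact jacobi.symm

theorem smul_lie_imagRootVec_imagRootVecTwo_eq_zero
    (hx : qCommutator p x ⁅imagRootVec p x y, x⁆ = 0)
    (hy : qCommutator p ⁅y, imagRootVec p x y⁆ y = 0) :
    (1 + p + p ^ 2) • ⁅imagRootVec p x y, imagRootVecTwo p x y⁆ = 0 := by
  have jacobi_left := qCommutator_qCommutator_left p (p ^ 2) ⁅y, imagRootVec p x y⁆
    (imagRootVec p x y) x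
  have jacobi_right := qCommutator_qCommutator_right p (p ^ 2) y (imagRootVec p x y)
    ⁅imagRootVec p x y, x⁆
  rw [← imagRootVecTwo_eq_qCommutator_lie] at jacobi_left
  rw [← imagRootVecTwo] at jacobi_right
  have lie_two : p • ⁅imagRootVecTwo p x y, imagRootVec p x y⁆ =
      (1 + p ^ 2) • ⁅imagRootVec p x y, imagRootVecTwo p x y⁆ := by
    calc p • ⁅imagRootVecTwo p x y, imagRootVec p x y⁆
      _ = qCommutator p (p • ⁅imagRootVecTwo p x y, y⁆) x +
            qCommutator p y (p • ⁅imagRootVecTwo p x y, x⁆) := by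
        rw [qCommutator_smul_left, qCommutator_smul_right, ← smul_add, ← lie_qCommutator,
          ← imagRootVec]
      _ = qCommutator p y
            (qCommutator (p ^ 2) (imagRootVec p x y) ⁅imagRootVec p x y, x⁆) -
          qCommutator p
            (qCommutator (p ^ 2) ⁅y, imagRootVec p x y⁆ (imagRootVec p x y)) x := by
        rw [← lie_skew, smul_neg, smul_lie_imagRootVecTwo_right hy, smul_lie_imagRootVecTwo hx,
          qCommutator_neg_left, neg_add_eq_sub]
      _ = (1 + p ^ 2) • ⁅imagRootVec p x y, imagRootVecTwo p x y⁆ := by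
        rw [jacobi_left, jacobi_right, add_sub_add_left_eq_sub, qCommutator_sub_qCommutator_swap]
  rw [← lie_skew, smul_neg] at lie_two
  linear_combination (norm := module) -lie_two

theorem smul_lie_imagRootVecTwo_lie (hx : qCommutator p x ⁅imagRootVec p x y, x⁆ = 0)
    (hcomm : ⁅imagRootVec p x y, imagRootVecTwo p x y⁆ = 0) :
    p • ⁅imagRootVecTwo p x y, ⁅imagRootVec p x y, x⁆⁆ =
      qCommutator (p ^ 2) (imagRootVec p x y) ⁅imagRootVec p x y, ⁅imagRootVec p x y, x⁆⁆ := by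
  have jacobi := leibniz_lie (imagRootVec p x y) (imagRootVecTwo p x y) x
  rw [hcomm, zero_lie, zero_add] at jacobi
  rw [← jacobi, ← lie_smul p (imagRootVec p x y), smul_lie_imagRootVecTwo hx,
    lie_qCommutator, lie_self, qCommutator_zero_left, zero_add]

theorem smul_qCommutator_lie_lie_imagRootVec_eq_zero
    (hx : qCommutator p x ⁅imagRootVec p x y, x⁆ = 0)
    (hcomm : ⁅imagRootVec p x y, imagRootVecTwo p x y⁆ = 0) :
    (1 + p ^ 2) • qCommutator p ⁅imagRootVec p x y, x⁆
      ⁅imagRootVec p x y, ⁅imagRootVec p x y, x⁆⁆ = 0 := by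
  set A := imagRootVec p x y
  have jacobi : qCommutator p x (qCommutator (p ^ 2) A ⁅A, ⁅A, x⁆⁆) =
      (p - 1) • qCommutator (p ^ 2) A (⁅A, x⁆ ^ 2) -
        qCommutator (p ^ 3) ⁅A, x⁆ ⁅A, ⁅A, x⁆⁆ := by
    rw [qCommutator_qCommutator_right, qCommutator_lie_lie hx, qCommutator_smul_right, ← lie_skew,
      qCommutator_neg_left, ← pow_succ', neg_add_eq_sub]
  have lie_serre : qCommutator p (qCommutator (p ^ 2) A ⁅A, x⁆) ⁅A, x⁆ +
      qCommutator p x (qCommutator (p ^ 2) A ⁅A, ⁅A, x⁆⁆) = 0 := by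
    rw [← smul_lie_imagRootVecTwo hx, ← smul_lie_imagRootVecTwo_lie hx hcomm,
      qCommutator_smul_left, qCommutator_smul_right, ← smul_add, ← lie_qCommutator, hx, lie_zero,
      smul_zero]
  rw [jacobi, ← add_sub_assoc, qCommutator_qCommutator_self_add_smul_sq] at lie_serre
  simpa using lie_serre

theorem qCommutator_lie_lie_imagRootVec_eq_zero (h₃ : IsSMulRegular R (1 + p + p ^ 2))
    (h₂ : IsSMulRegular R (1 + p ^ 2))
    (hx : qCommutator p x ⁅imagRootVec p x y, x⁆ = 0)
    (hy : qCommutator p ⁅y, imagRootVec p x y⁆ y = 0) :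
    qCommutator p ⁅imagRootVec p x y, x⁆ ⁅imagRootVec p x y, ⁅imagRootVec p x y, x⁆⁆ = 0 := by
  have hcomm := h₃.right_eq_zero_of_smul (smul_lie_imagRootVec_imagRootVecTwo_eq_zero hx hy)
  exact h₂.right_eq_zero_of_smul (smul_qCommutator_lie_lie_imagRootVec_eq_zero hx hcomm)

end ImaginaryRootVectors

section SerreRelations

variable [Field K] [Ring R] [Algebra K R]

/-- The left-hand side of the quantized Serre relation of type `A₁⁽¹⁾` with parameter `q`, for
arbitrary elements of an algebra. -/
def quantumSerre (q : K) (x y : R) : R :=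
  x ^ 3 * y - (q ^ 2 + 1 + q⁻¹ ^ 2) • (x ^ 2 * y * x) + (q ^ 2 + 1 + q⁻¹ ^ 2) • (x * y * x ^ 2) -
    y * x ^ 3

theorem quantumSerre_smul_left (q c : K) (x y : R) :
    quantumSerre q (c • x) y = c ^ 3 • quantumSerre q x y := by
  simp only [quantumSerre, smul_pow, smul_mul_assoc, mul_smul_comm]
  module

theorem quantumSerre_smul_right (q c : K) (x y : R) :
    quantumSerre q x (c • y) = c • quantumSerre q x y := by
  simp only [quantumSerre, smul_mul_assoc, mul_smul_comm]
  module

variable {q : K}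

theorem qCommutator_lie_imagRootVec_eq_smul_quantumSerre (hq : q ≠ 0) (x y : R) :
    qCommutator (q⁻¹ ^ 2) x ⁅imagRootVec (q⁻¹ ^ 2) x y, x⁆ = q⁻¹ ^ 2 • quantumSerre q x y := by
  simp only [quantumSerre, imagRootVec, qCommutator, Ring.lie_def, pow_succ x, pow_zero, one_mul,
    mul_sub, sub_mul, smul_mul_assoc, mul_smul_comm, mul_assoc]
  match_scalars <;> field_simp <;> ring

theorem qCommutator_lie_imagRootVec_eq_neg_smul_quantumSerre (hq : q ≠ 0) (x y : R) :
    qCommutator (q⁻¹ ^ 2) ⁅y, imagRootVec (q⁻¹ ^ 2) x y⁆ y =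
      -(q⁻¹ ^ 2 • quantumSerre q y x) := by
  simp only [quantumSerre, imagRootVec, qCommutator, Ring.lie_def, pow_succ y, pow_zero, one_mul,
    mul_sub, sub_mul, smul_mul_assoc, mul_smul_comm, mul_assoc]
  match_scalars <;> field_simp <;> ring

theorem qCommutator_lie_eq_zero_of_quantumSerre (hq : q ≠ 0) (h₃ : q ^ 4 + q ^ 2 + 1 ≠ 0)
    (h₂ : q ^ 4 + 1 ≠ 0) {x y : R} (hxy : quantumSerre q x y = 0) (hyx : quantumSerre q y x = 0) :
    qCommutator (q⁻¹ ^ 2) x ⁅imagRootVec (q⁻¹ ^ 2) x y, x⁆ = 0 ∧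
    qCommutator (q⁻¹ ^ 2) ⁅imagRootVec (q⁻¹ ^ 2) x y, x⁆
      ⁅imagRootVec (q⁻¹ ^ 2) x y, ⁅imagRootVec (q⁻¹ ^ 2) x y, x⁆⁆ = 0 := by
  have hx : qCommutator (q⁻¹ ^ 2) x ⁅imagRootVec (q⁻¹ ^ 2) x y, x⁆ = 0 := by
    rw [qCommutator_lie_imagRootVec_eq_smul_quantumSerre hq, hxy, smul_zero]
  have hy : qCommutator (q⁻¹ ^ 2) ⁅y, imagRootVec (q⁻¹ ^ 2) x y⁆ y = 0 := by
    rw [qCommutator_lie_imagRootVec_eq_neg_smul_quantumSerre hq, hyx, smul_zero, neg_zero]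
  have hp₃ : 1 + q⁻¹ ^ 2 + (q⁻¹ ^ 2) ^ 2 ≠ 0 := by
    convert mul_ne_zero (pow_ne_zero 4 (inv_ne_zero hq)) h₃ using 1
    field_simp
  have hp₂ : 1 + (q⁻¹ ^ 2) ^ 2 ≠ 0 := by
    convert mul_ne_zero (pow_ne_zero 4 (inv_ne_zero hq)) h₂ using 1
    field_simp
  exact ⟨hx, qCommutator_lie_lie_imagRootVec_eq_zero (.of_ne_zero hp₃) (.of_ne_zero hp₂) hx hy⟩

theorem stmt1_general (hq : q ≠ 0) (h₃ : q ^ 4 + q ^ 2 + 1 ≠ 0) (h₂ : q ^ 4 + 1 ≠ 0) {x y : R}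
    (hxy : quantumSerre q x y = 0) (hyx : quantumSerre q y x = 0) (d : K) {A a b c : R}
    (hA : A = d • (y * x - q⁻¹ ^ 2 • (x * y)))
    (ha : a = A * x - x * A) (hb : b = A * a - a * A) (hc : c = A * b - b * A) :
    x * b = q ^ (-2 : ℤ) • (b * x) + (q ^ (-2 : ℤ) - 1) • a ^ 2 ∧
    a * c = q ^ (-2 : ℤ) • (c * a) + (q ^ (-2 : ℤ) - 1) • b ^ 2 := by
  have hA' : A = imagRootVec (q⁻¹ ^ 2) x (d • y) := by
    rw [hA, imagRootVec, qCommutator_smul_left, qCommutator]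
  have hp : q ^ (-2 : ℤ) = q⁻¹ ^ 2 := by rw [zpow_neg, inv_pow, zpow_ofNat]
  obtain ⟨hxa, hab⟩ := qCommutator_lie_eq_zero_of_quantumSerre (y := d • y) hq h₃ h₂
    (by rw [quantumSerre_smul_right, hxy, smul_zero])
    (by rw [quantumSerre_smul_left, hyx, smul_zero])
  rw [← Ring.lie_def] at ha hb hc
  rw [← hA', ← ha] at hxa hab
  rw [← hb] at hab
  subst hc hb ha
  rw [hp]
  exact ⟨qCommutator_eq_iff_mul_eq.mp (qCommutator_lie_lie hxa),
    qCommutator_eq_iff_mul_eq.mp (qCommutator_lie_lie hab)⟩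

end SerreRelations

theorem qq_ne_zero : qq ≠ 0 := RatFunc.X_ne_zero

theorem qq_pow_four_add_sq_add_one_ne_zero : qq ^ 4 + qq ^ 2 + 1 ≠ 0 := by
  have hP : (.X ^ 4 + .X ^ 2 + 1 : Polynomial ℚ) ≠ 0 :=
    fun h ↦ by simpa using congrArg (Polynomial.eval 0) h
  simpa [qq] using RatFunc.algebraMap_ne_zero hP

theorem qq_pow_four_add_one_ne_zero : qq ^ 4 + 1 ≠ 0 := by
  have hP : (.X ^ 4 + 1 : Polynomial ℚ) ≠ 0 :=
    fun h ↦ by simpa using congrArg (Polynomial.eval 0) h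
  simpa [qq] using RatFunc.algebraMap_ne_zero hP

theorem quantumSerre_E1_E2 : quantumSerre qq E1 E2 = 0 := by
  simpa [quantumSerre, E1, E2, box3] using RingQuot.mkAlgHom_rel F SerreRel.rel1

theorem quantumSerre_E2_E1 : quantumSerre qq E2 E1 = 0 := by
  simpa [quantumSerre, E1, E2, box3] using RingQuot.mkAlgHom_rel F SerreRel.rel2

/-- In `U` the straightening relations `v₀v₂ = q⁻²v₂v₀ + (q⁻² − 1)v₁²` and
`v₁v₃ = q⁻²v₃v₁ + (q⁻² − 1)v₂²` hold. -/
theorem stmt1 :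
    v0 * v2 = qq ^ (-2 : ℤ) • (v2 * v0) + (qq ^ (-2 : ℤ) - 1) • v1 ^ 2 ∧
    v1 * v3 = qq ^ (-2 : ℤ) • (v3 * v1) + (qq ^ (-2 : ℤ) - 1) • v2 ^ 2 :=
  stmt1_general qq_ne_zero qq_pow_four_add_sq_add_one_ne_zero qq_pow_four_add_one_ne_zero
    quantumSerre_E1_E2 quantumSerre_E2_E1 _ rfl rfl rfl rfl
end
end

section
/- In U, for every positive integer l one has u₁u₃^l = q^{−2l}u₃^l u₁ + (q^{−4l+2} − q^{−2l+2})u₃^{l−1}u₂². -/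
noncomputable section

/-!
Put `s = q⁻²`. After rescaling `E₂`, the `uᵢ` are the iterated commutators `ad(P)ⁱ E₁` with
`P = E₂E₁ - sE₁E₂`, the root vector of the imaginary root `δ`. The vector
`Z = E₂[P, E₁] - s[P, E₁]E₂` of weight `2δ` commutes with `P` and satisfies
`s[Z, E₁] = P[P, E₁] - s²[P, E₁]P`; applying `ad P` carries the last relation over to every `uᵢ`.
The Serre relation for `E₁` says that `u₀u₁ = s u₁u₀`. If `uᵢuᵢ₊₁ = s uᵢ₊₁uᵢ`, then applying `ad Z`,
`ad P` and `(ad P)²` to this relation and eliminating gives `1 + s²` times the same relation for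
`uᵢ₊₁` and `uᵢ₊₂`. A single `ad P` turns it into the commutation rule for `uᵢ` and `uᵢ₊₂`, which is
the case `l = 1` when `i = 1`; the general case is an induction on `l`.
-/

section Commutators

attribute [local instance] LieRing.ofAssociativeRing

variable {K R : Type*} [CommRing K] [Ring R] [Algebra K R]

/-- The `s`-commutator `xy - s yx`; its vanishing says that `x` and `y` commute up to `s`. -/
def qBracket (s : K) (x y : R) : R := x * y - s • (y * x)

/-- The iterated commutator `ad(P)ⁿ x`. With `P` and `x` root vectors of `δ` and of a real root `α`,
it is proportional to a root vector of `α + nδ`. -/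
def adIter (P x : R) : ℕ → R
  | 0 => x
  | n + 1 => ⁅P, adIter P x n⁆

/-- The quantized Serre relation `x³y - [3]x²yx + [3]xyx² - yx³ = 0` with `s = q⁻²`, multiplied by
`s` so that it makes sense over any commutative ring. -/
def QuantumSerre (s : K) (x y : R) : Prop :=
  s • (x ^ 3 * y) - (1 + s + s ^ 2) • (x ^ 2 * y * x) + (1 + s + s ^ 2) • (x * y * x ^ 2)
    - s • (y * x ^ 3) = 0

theorem qBracket_eq_zero_iff {s : K} {x y : R} : qBracket s x y = 0 ↔ x * y = s • (y * x) :=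
  sub_eq_zero

theorem lie_qBracket (P : R) (s : K) (x y : R) :
    ⁅P, qBracket s x y⁆ = qBracket s ⁅P, x⁆ y + qBracket s x ⁅P, y⁆ := by
  simp only [qBracket, Ring.lie_def, mul_sub, sub_mul, mul_assoc, smul_mul_assoc, mul_smul_comm]
  module

theorem lie_qBracket_self (P : R) (s : K) (y : R) :
    ⁅P, qBracket s P y⁆ = qBracket s P ⁅P, y⁆ := by
  rw [lie_qBracket, lie_self, add_eq_right, qBracket_eq_zero_iff, zero_mul, mul_zero, smul_zero]

theorem adIter_smul (c : K) (P x : R) (n : ℕ) : adIter (c • P) x n = c ^ n • adIter P x n := by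
  induction n with
  | zero => simp only [adIter, pow_zero, one_smul]
  | succ n ih =>
    rw [adIter, adIter, ih, smul_lie, lie_smul (c ^ n) P (adIter P x n), smul_smul, pow_succ']

theorem qBracket_smul_left (s c : K) (x y : R) : qBracket s (c • x) y = c • qBracket s x y := by
  simp only [qBracket, smul_mul_assoc, mul_smul_comm]
  module

theorem qBracket_smul_right (s c : K) (x y : R) : qBracket s x (c • y) = c • qBracket s x y := by
  simp only [qBracket, smul_mul_assoc, mul_smul_comm]
  module

theorem qBracket_neg_left (s : K) (x y : R) : qBracket s (-x) y = -qBracket s x y := by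
  simp only [qBracket, neg_mul, mul_neg, smul_neg]
  abel

namespace QuantumSerre

variable {s : K} {x y : R}

theorem smul_left (h : QuantumSerre s x y) (c : K) : QuantumSerre s (c • x) y := by
  have h' := congrArg (c ^ 3 • ·) h
  simp only [QuantumSerre, smul_pow, smul_mul_assoc, mul_smul_comm, smul_zero] at h' ⊢
  rw [← h']
  module

theorem smul_right (h : QuantumSerre s x y) (c : K) : QuantumSerre s x (c • y) := by
  have h' := congrArg (c • ·) h
  simp only [QuantumSerre, smul_mul_assoc, mul_smul_comm, smul_zero] at h' ⊢
  rw [← h']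
  module

theorem qBracket_lie_right (h : QuantumSerre s x y) : qBracket s x ⁅qBracket s y x, x⁆ = 0 := by
  rw [← h]
  simp only [qBracket, Ring.lie_def, pow_succ, pow_zero, one_mul, mul_sub, sub_mul, mul_assoc,
    smul_mul_assoc, mul_smul_comm]
  module

theorem qBracket_lie_left (h : QuantumSerre s y x) : qBracket s ⁅y, qBracket s y x⁆ y = 0 := by
  rw [← neg_eq_zero, ← h]
  simp only [qBracket, Ring.lie_def, pow_succ, pow_zero, one_mul, mul_sub, sub_mul, mul_assoc,
    smul_mul_assoc, mul_smul_comm]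
  module

end QuantumSerre

/-- The vector of weight `2δ` attached to root vectors `x` and `y` of the two simple roots of affine
`𝔰𝔩₂`. -/
def twoDelta (s : K) (x y : R) : R := qBracket s y ⁅qBracket s y x, x⁆

theorem twoDelta_eq_qBracket_lie_left (s : K) (x y : R) :
    twoDelta s x y = qBracket s ⁅y, qBracket s y x⁆ x := by
  have leibniz : 0 = qBracket s ⁅qBracket s y x, y⁆ x + twoDelta s x y := by
    rw [twoDelta, ← lie_qBracket, lie_self]
  rwa [← lie_skew, qBracket_neg_left, eq_comm, neg_add_eq_zero, eq_comm] at leibniz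

theorem qBracket_qBracket_sub_qBracket_qBracket (s : K) (P x y : R) :
    qBracket s y (qBracket (s ^ 2) P ⁅P, x⁆) - qBracket s (qBracket (s ^ 2) ⁅y, P⁆ P) x =
      qBracket (s ^ 2) P (qBracket s y ⁅P, x⁆) - qBracket (s ^ 2) (qBracket s ⁅y, P⁆ x) P := by
  simp only [qBracket, Ring.lie_def, mul_sub, sub_mul, mul_assoc, smul_mul_assoc, mul_smul_comm]
  module

section SerrePair

variable {s : K} {x y : R}

theorem smul_lie_twoDelta_left (hxy : QuantumSerre s x y) :
    s • ⁅twoDelta s x y, x⁆ = qBracket (s ^ 2) (qBracket s y x) ⁅qBracket s y x, x⁆ := by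
  have expand (a : R) : s • ⁅qBracket s y a, x⁆ =
      qBracket (s ^ 2) (qBracket s y x) a - y * qBracket s x a + s ^ 2 • (qBracket s x a * y) := by
    simp only [qBracket, Ring.lie_def, mul_sub, sub_mul, mul_assoc, smul_mul_assoc, mul_smul_comm]
    module
  rw [twoDelta, expand, hxy.qBracket_lie_right, mul_zero, zero_mul, smul_zero, sub_zero, add_zero]

theorem smul_lie_twoDelta_right (hyx : QuantumSerre s y x) :
    s • ⁅twoDelta s x y, y⁆ = -qBracket (s ^ 2) ⁅y, qBracket s y x⁆ (qBracket s y x) := by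
  have expand (b : R) : s • ⁅qBracket s b x, y⁆ =
      -qBracket (s ^ 2) b (qBracket s y x) + qBracket s b y * x
        - s ^ 2 • (x * qBracket s b y) := by
    simp only [qBracket, Ring.lie_def, mul_sub, sub_mul, mul_assoc, smul_mul_assoc, mul_smul_comm]
    module
  rw [twoDelta_eq_qBracket_lie_left, expand, hyx.qBracket_lie_left, mul_zero, zero_mul, smul_zero,
    sub_zero, add_zero]

theorem lie_twoDelta_qBracket (hxy : QuantumSerre s x y) (hyx : QuantumSerre s y x)
    (reg : IsSMulRegular R (1 + s + s ^ 2)) : ⁅twoDelta s x y, qBracket s y x⁆ = 0 := by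
  set P := qBracket s y x with hP
  set Z := twoDelta s x y
  have expand : s • ⁅Z, P⁆ = -(1 + s ^ 2) • ⁅Z, P⁆ := calc
    s • ⁅Z, P⁆ = qBracket s (s • ⁅Z, y⁆) x + qBracket s y (s • ⁅Z, x⁆) := by
      rw [hP, lie_qBracket, qBracket_smul_left, qBracket_smul_right, smul_add]
    _ = qBracket s y (qBracket (s ^ 2) P ⁅P, x⁆) - qBracket s (qBracket (s ^ 2) ⁅y, P⁆ P) x := by
      rw [smul_lie_twoDelta_left hxy, smul_lie_twoDelta_right hyx, qBracket_neg_left,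
        neg_add_eq_sub]
    _ = qBracket (s ^ 2) P Z - qBracket (s ^ 2) Z P := by
      rw [qBracket_qBracket_sub_qBracket_qBracket, ← twoDelta_eq_qBracket_lie_left, ← twoDelta]
    _ = -(1 + s ^ 2) • ⁅Z, P⁆ := by
      simp only [qBracket, Ring.lie_def]
      module
  refine reg.right_eq_zero_of_smul ?_
  linear_combination (norm := module) expand

theorem smul_lie_twoDelta_adIter (hxy : QuantumSerre s x y) (hyx : QuantumSerre s y x)
    (reg : IsSMulRegular R (1 + s + s ^ 2)) (n : ℕ) :
    s • ⁅twoDelta s x y, adIter (qBracket s y x) x n⁆ =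
      qBracket (s ^ 2) (qBracket s y x) (adIter (qBracket s y x) x (n + 1)) := by
  set P := qBracket s y x
  set Z := twoDelta s x y
  have comm : ⁅P, Z⁆ = 0 := by
    rw [← lie_skew, lie_twoDelta_qBracket hxy hyx reg, neg_zero]
  induction n with
  | zero => exact smul_lie_twoDelta_left hxy
  | succ n ih => calc
      s • ⁅Z, ⁅P, adIter P x n⁆⁆ = ⁅P, s • ⁅Z, adIter P x n⁆⁆ := by
        rw [lie_smul s P, leibniz_lie P, comm, zero_lie, zero_add]
      _ = qBracket (s ^ 2) P (adIter P x (n + 2)) := by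
        rw [ih, lie_qBracket_self, ← adIter]

end SerrePair

theorem qBracket_lie_lie_eq_smul_sq {s : K} {P a : R} (h : qBracket s a ⁅P, a⁆ = 0) :
    qBracket s a ⁅P, ⁅P, a⁆⁆ = (s - 1) • ⁅P, a⁆ ^ 2 := by
  have leibniz : qBracket s ⁅P, a⁆ ⁅P, a⁆ + qBracket s a ⁅P, ⁅P, a⁆⁆ = 0 := by
    rw [← lie_qBracket, h, lie_zero]
  rw [eq_neg_of_add_eq_zero_right leibniz, qBracket, sq]
  module

theorem qBracket_lie_lie_lie_eq_zero {s : K} {P Z a : R}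
    (reg : IsSMulRegular R (1 + s ^ 2))
    (ha : s • ⁅Z, a⁆ = qBracket (s ^ 2) P ⁅P, a⁆)
    (hb : s • ⁅Z, ⁅P, a⁆⁆ = qBracket (s ^ 2) P ⁅P, ⁅P, a⁆⁆)
    (h : qBracket s a ⁅P, a⁆ = 0) : qBracket s ⁅P, a⁆ ⁅P, ⁅P, a⁆⁆ = 0 := by
  have adP : ⁅P, qBracket s a ⁅P, a⁆⁆ = 0 := by rw [h, lie_zero]
  have adP_adP : ⁅P, ⁅P, qBracket s a ⁅P, a⁆⁆⁆ = 0 := by rw [adP, lie_zero]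
  have adZ : qBracket s (qBracket (s ^ 2) P ⁅P, a⁆) ⁅P, a⁆ +
      qBracket s a (qBracket (s ^ 2) P ⁅P, ⁅P, a⁆⁆) = 0 := by
    rw [← ha, ← hb, qBracket_smul_left, qBracket_smul_right, ← smul_add, ← lie_qBracket, h,
      lie_zero, smul_zero]
  have eliminate : (1 + s ^ 2) • qBracket s ⁅P, a⁆ ⁅P, ⁅P, a⁆⁆ =
      ⁅P, ⁅P, qBracket s a ⁅P, a⁆⁆⁆ + (1 - s ^ 2) • (⁅P, qBracket s a ⁅P, a⁆⁆ * P) -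
        (qBracket s (qBracket (s ^ 2) P ⁅P, a⁆) ⁅P, a⁆ +
          qBracket s a (qBracket (s ^ 2) P ⁅P, ⁅P, a⁆⁆)) := by
    simp only [qBracket, Ring.lie_def, mul_sub, sub_mul, mul_assoc, smul_mul_assoc, mul_smul_comm]
    module
  refine reg.right_eq_zero_of_smul ?_
  rw [eliminate, adP_adP, adP, adZ, zero_mul, smul_zero, add_zero, sub_zero]

theorem qBracket_adIter_succ {s : K} {x y : R} (hxy : QuantumSerre s x y)
    (hyx : QuantumSerre s y x) (reg₂ : IsSMulRegular R (1 + s ^ 2))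
    (reg₃ : IsSMulRegular R (1 + s + s ^ 2)) (n : ℕ) :
    qBracket s (adIter (qBracket s y x) x n) (adIter (qBracket s y x) x (n + 1)) = 0 := by
  induction n with
  | zero => exact hxy.qBracket_lie_right
  | succ n ih =>
    exact qBracket_lie_lie_lie_eq_zero reg₂ (smul_lie_twoDelta_adIter hxy hyx reg₃ n)
      (smul_lie_twoDelta_adIter hxy hyx reg₃ (n + 1)) ih

theorem mul_pow_succ_of_qBracket {s : K} {x y z : R} (hyz : qBracket s y z = 0)
    (hxz : qBracket s x z = (s - 1) • y ^ 2) (l : ℕ) :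
    x * z ^ (l + 1) = s ^ (l + 1) • (z ^ (l + 1) * x) +
      (s ^ (2 * l + 1) - s ^ l) • (z ^ l * y ^ 2) := by
  have sq_mul : y ^ 2 * z = s ^ 2 • (z * y ^ 2) := by
    rw [qBracket_eq_zero_iff] at hyz
    rw [sq, mul_assoc, hyz, mul_smul_comm, ← mul_assoc, hyz, smul_mul_assoc, smul_smul, mul_assoc,
      sq]
  have mul_swap : x * z = s • (z * x) + (s - 1) • y ^ 2 := by
    rw [← hxz, qBracket, add_sub_cancel]
  induction l with
  | zero => simpa using mul_swap
  | succ l ih => calc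
      x * z ^ (l + 2) = x * z ^ (l + 1) * z := by rw [pow_succ z, mul_assoc]
      _ = s ^ (l + 1) • (z ^ (l + 1) * (x * z)) +
          (s ^ (2 * l + 1) - s ^ l) • (z ^ l * (y ^ 2 * z)) := by
        rw [ih, add_mul, smul_mul_assoc, smul_mul_assoc, mul_assoc, mul_assoc]
      _ = s ^ (l + 2) • (z ^ (l + 2) * x) +
          (s ^ (2 * (l + 1) + 1) - s ^ (l + 1)) • (z ^ (l + 1) * y ^ 2) := by
        rw [mul_swap, sq_mul, mul_add, mul_smul_comm, mul_smul_comm, mul_smul_comm, ← mul_assoc,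
          ← mul_assoc, ← pow_succ, ← pow_succ]
        module

theorem stmt6_general {s : K} {x y : R} (hxy : QuantumSerre s x y) (hyx : QuantumSerre s y x)
    (reg₂ : IsSMulRegular R (1 + s ^ 2)) (reg₃ : IsSMulRegular R (1 + s + s ^ 2)) (n l : ℕ) :
    adIter (qBracket s y x) x n * adIter (qBracket s y x) x (n + 2) ^ (l + 1) =
      s ^ (l + 1) • (adIter (qBracket s y x) x (n + 2) ^ (l + 1) * adIter (qBracket s y x) x n) +
        (s ^ (2 * l + 1) - s ^ l) •
          (adIter (qBracket s y x) x (n + 2) ^ l * adIter (qBracket s y x) x (n + 1) ^ 2) :=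
  mul_pow_succ_of_qBracket (qBracket_adIter_succ hxy hyx reg₂ reg₃ (n + 1))
    (qBracket_lie_lie_eq_smul_sq (qBracket_adIter_succ hxy hyx reg₂ reg₃ n)) l

end Commutators

theorem transcendental_qq_inv_sq : Transcendental ℚ (qq⁻¹ ^ 2) := by
  have hq : Transcendental ℚ qq := by
    -- The two `ℚ`-algebra structures on `F` are equal, but not definitionally.
    convert RatFunc.transcendental_X (K := ℚ)
    · exact Subsingleton.elim _ _
    · rfl
  have hq_inv : Transcendental ℚ qq⁻¹ := IsAlgebraic.inv_iff.not.mpr hq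
  exact hq_inv.pow two_pos

theorem one_add_qq_inv_sq_sq_ne_zero : 1 + (qq⁻¹ ^ 2) ^ 2 ≠ 0 := by
  intro h
  have hp := transcendental_iff.mp transcendental_qq_inv_sq (1 + Polynomial.X ^ 2)
    (by simpa using h)
  simpa using congrArg (Polynomial.eval 0) hp

theorem one_add_qq_inv_sq_add_sq_ne_zero : 1 + qq⁻¹ ^ 2 + (qq⁻¹ ^ 2) ^ 2 ≠ 0 := by
  intro h
  have hp := transcendental_iff.mp transcendental_qq_inv_sq (1 + Polynomial.X + Polynomial.X ^ 2)
    (by simpa using h)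
  simpa using congrArg (Polynomial.eval 0) hp

theorem qq_inv_sq_mul_box3 : qq⁻¹ ^ 2 * box3 = 1 + qq⁻¹ ^ 2 + (qq⁻¹ ^ 2) ^ 2 := by
  have hq : qq ≠ 0 := RatFunc.X_ne_zero
  rw [box3]
  field_simp

theorem quantumSerre_E1_E2_s6 : QuantumSerre (qq⁻¹ ^ 2) E1 E2 := by
  have h := congrArg (qq⁻¹ ^ 2 • ·) (RingQuot.mkAlgHom_rel F SerreRel.rel1)
  simp only [map_sub, map_add, map_mul, map_pow, map_smul, map_zero, smul_sub, smul_add, smul_smul,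
    smul_zero, qq_inv_sq_mul_box3] at h
  exact h

theorem quantumSerre_E2_E1_s6 : QuantumSerre (qq⁻¹ ^ 2) E2 E1 := by
  have h := congrArg (qq⁻¹ ^ 2 • ·) (RingQuot.mkAlgHom_rel F SerreRel.rel2)
  simp only [map_sub, map_add, map_mul, map_pow, map_smul, map_zero, smul_sub, smul_add, smul_smul,
    smul_zero, qq_inv_sq_mul_box3] at h
  exact h

/-- The multiple of `E₂` for which `E₂E₁ - q⁻²E₁E₂` becomes `(1 - q⁻²)⁻²A`, so that its iterated
commutators with `E₁` are the `uᵢ`. -/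
def scaledE2 : U := ((1 - qq⁻¹ ^ 2)⁻¹ ^ 2 * (qq + qq⁻¹)⁻¹) • E2

theorem qBracket_scaledE2_E1 :
    qBracket (qq⁻¹ ^ 2) scaledE2 E1 = (1 - qq⁻¹ ^ 2)⁻¹ ^ 2 • Aelt := by
  rw [scaledE2, qBracket_smul_left, mul_smul, qBracket, Aelt]

theorem u1_eq_adIter : u1 = adIter (qBracket (qq⁻¹ ^ 2) scaledE2 E1) E1 1 := by
  rw [qBracket_scaledE2_E1, adIter_smul, pow_one]
  rfl

theorem u2_eq_adIter : u2 = adIter (qBracket (qq⁻¹ ^ 2) scaledE2 E1) E1 2 := by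
  rw [qBracket_scaledE2_E1, adIter_smul, ← pow_mul]
  rfl

theorem u3_eq_adIter : u3 = adIter (qBracket (qq⁻¹ ^ 2) scaledE2 E1) E1 3 := by
  rw [qBracket_scaledE2_E1, adIter_smul, ← pow_mul]
  rfl

theorem u1_mul_u3_pow_succ (l : ℕ) :
    u1 * u3 ^ (l + 1) = (qq⁻¹ ^ 2) ^ (l + 1) • (u3 ^ (l + 1) * u1) +
      ((qq⁻¹ ^ 2) ^ (2 * l + 1) - (qq⁻¹ ^ 2) ^ l) • (u3 ^ l * u2 ^ 2) := by
  rw [u1_eq_adIter, u2_eq_adIter, u3_eq_adIter]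
  exact stmt6_general (quantumSerre_E1_E2_s6.smul_right _) (quantumSerre_E2_E1_s6.smul_left _)
    (.of_ne_zero one_add_qq_inv_sq_sq_ne_zero) (.of_ne_zero one_add_qq_inv_sq_add_sq_ne_zero) 1 l

theorem inv_sq_pow_eq_zpow {G : Type*} [DivisionMonoid G] (a : G) (n : ℕ) :
    (a⁻¹ ^ 2) ^ n = a ^ (-2 * (n : ℤ)) := by
  rw [← pow_mul, inv_pow, ← zpow_natCast, ← zpow_neg]
  push_cast
  rw [neg_mul]

/-- In `U`, for every positive integer `l` one has
`u₁u₃^l = q^{−2l}u₃^l u₁ + (q^{−4l+2} − q^{−2l+2})u₃^{l−1}u₂²`. -/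
theorem stmt6 (l : ℕ) (hl : 1 ≤ l) :
    u1 * u3 ^ l =
      qq ^ (-2 * (l : ℤ)) • (u3 ^ l * u1) +
        (qq ^ (-4 * (l : ℤ) + 2) - qq ^ (-2 * (l : ℤ) + 2)) • (u3 ^ (l - 1) * u2 ^ 2) := by
  obtain ⟨n, rfl⟩ := Nat.exists_eq_add_of_le' hl
  rw [Nat.add_sub_cancel, u1_mul_u3_pow_succ, inv_sq_pow_eq_zpow, inv_sq_pow_eq_zpow,
    inv_sq_pow_eq_zpow]
  push_cast
  ring_nf
end
end
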